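/- arXiv:1405.6933 — 2 statements merged into one kernel-verified Lean document; each statement's English description precedes it below -/
import Mathlib

section
/- Fix n ≥ 1. For a column vector v ∈ ℍⁿ (viewed as an n×1 matrix over the quaternions), let X_v denote the (1+n)×(1+n) quaternionic block matrix fromBlocks 0 (−(conj v)ᵀ) v 0, where the top-right block is the 1×n row with entries −conj(vⱼ) and the bottom-left block is v. For u ∈ ℍ with re(u) = 0, let α_u = fromBlocks (u) 0 0 0 be the matrix whose only nonzero entry is u in the top-left corner. Then α_u·X_v − X_v·α_u = X_{−v•u}, where −v•u denotes the column vector with entries −vⱼ·u (entrywise right multiplication by u). Consequently, [α_u,[α_u,X_v]] = X_{v•u²} = −‖u‖²·X_v; in particular, if ‖u‖ = 1 then the adjoint action of α_u on the space {X_v : v ∈ ℍⁿ} squares to minus the identity. -/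
/-!
Block multiplication shows that `[α_u, X_v]` has lower-left block `-v•u` and upper-right block
`-(u * conj v)`; as `conj u = -u`, this is `X_{-v•u}`. Applying this twice gives `X_{v•u²}`, and
`u² = -(u * conj u) = -‖u‖²` is a real scalar, which `X` commutes with.
-/

open Matrix Quaternion

/-- The tangent-space matrix `X_v ∈ 𝔭 ⊂ sp(1+n)` associated to `v ∈ ℍⁿ`:
`fromBlocks 0 (−(conj v)ᵀ) v 0`. -/
noncomputable def Xh {n : ℕ} (v : Fin n → ℍ[ℝ]) :
    Matrix (Fin 1 ⊕ Fin n) (Fin 1 ⊕ Fin n) ℍ[ℝ] :=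
  fromBlocks 0 (Matrix.of fun _ j => -(star (v j)))
    (Matrix.of fun i _ => v i) 0

/-- The matrix `α_u ∈ 𝔪 = sp(1)` with only nonzero entry `u` in the
top-left corner. -/
noncomputable def alphaH (n : ℕ) (u : ℍ[ℝ]) :
    Matrix (Fin 1 ⊕ Fin n) (Fin 1 ⊕ Fin n) ℍ[ℝ] :=
  fromBlocks (Matrix.of fun _ _ => u) 0 0 0

/-- For purely imaginary `u` one has `conj u = -u`, which makes the upper-right block
`-(u * conj v)` of the commutator agree with that of `X_{-v•u}`. -/
theorem commutator_alphaH_Xh {n : ℕ} {u : ℍ[ℝ]} (hu : u.re = 0) (v : Fin n → ℍ[ℝ]) :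
    alphaH n u * Xh v - Xh v * alphaH n u = Xh (fun j => -(v j * u)) := by
  have hs : star u = -u := Quaternion.star_eq_neg.mpr hu
  ext1 i j
  rcases i with i | i <;> rcases j with j | j <;>
    simp [alphaH, Xh, Matrix.fromBlocks_multiply, Matrix.mul_apply, hs]

theorem mul_self_of_re_eq_zero {u : ℍ[ℝ]} (hu : u.re = 0) :
    u * u = ((-‖u‖ ^ 2 : ℝ) : ℍ[ℝ]) := by
  have hs : star u = -u := Quaternion.star_eq_neg.mpr hu
  have h := Quaternion.self_mul_star u
  rw [hs, mul_neg, Quaternion.normSq_eq_norm_mul_self, ← sq ‖u‖] at h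
  rw [Quaternion.coe_neg, ← h, neg_neg]

/-- for purely imaginary `u`,
`[α_u, X_v] = X_{−v•u}` (entrywise right multiplication), hence
`[α_u,[α_u,X_v]] = X_{v•u²} = −‖u‖²·X_v`; for `‖u‖ = 1` the adjoint
action of `α_u` on `{X_v : v ∈ ℍⁿ}` squares to minus the identity. -/
theorem stmt_11 (n : ℕ) (hn : 1 ≤ n) (u : ℍ[ℝ]) (hu : u.re = 0)
    (v : Fin n → ℍ[ℝ]) :
    alphaH n u * Xh v - Xh v * alphaH n u = Xh (fun j => -(v j * u)) ∧
    (alphaH n u * (alphaH n u * Xh v - Xh v * alphaH n u)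
        - (alphaH n u * Xh v - Xh v * alphaH n u) * alphaH n u
      = Xh (fun j => v j * (u * u))) ∧
    Xh (fun j => v j * (u * u)) = -((‖u‖ ^ 2 : ℝ) • Xh v) := by
  refine ⟨commutator_alphaH_Xh hu v, ?_, ?_⟩
  · rw [commutator_alphaH_Xh hu v, commutator_alphaH_Xh hu]
    simp only [neg_mul, neg_neg, mul_assoc]
  · rw [mul_self_of_re_eq_zero hu]
    ext1 i j
    rcases i with i | i <;> rcases j with j | j <;>
      simp [Xh, Quaternion.mul_coe_eq_smul, -Quaternion.coe_neg, -Quaternion.coe_pow]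
end

section
/- Fix n ≥ 1 and adopt the notation X_v (for v ∈ ℍⁿ) and α_u (for u ∈ ℍ with re(u) = 0) of the quaternionic block-matrix construction. For all u, u' ∈ ℍ with re(u) = re(u') = 0 and all v ∈ ℍⁿ, the adjoint actions anticommute up to the inner product of u and u': [α_u,[α_{u'},X_v]] + [α_{u'},[α_u,X_v]] = X_{v•(u'·u + u·u')} = −2·⟨u,u'⟩·X_v, where ⟨u,u'⟩ = re(u * conj(u')) and v•q denotes entrywise right multiplication of the column vector v by the quaternion q. In particular, if u ⟂ u' then ad_{α_u} and ad_{α_{u'}} anticommute on the space {X_v : v ∈ ℍⁿ}. -/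
/-!
For purely imaginary `u`, the block multiplication gives `[α_u, X_v] = X_{-(v•u)}`; the hypothesis
`re u = 0` enters through `star u = -u`, which matches the upper-right block `-(u * star (v j))`
with that of `X_{-(v•u)}` (`mbracket_alphaH_Xh`). Applying this twice, the two signs cancel and
`[α_u, [α_{u'}, X_v]] = X_{v•(u' u)}`; since `v ↦ X_v` is additive, symmetrizing in `u, u'` gives
the first equality. The second holds because `u' u + u u'` is the real number `-2⟨u, u'⟩` for
imaginary quaternions (`imag_anticomm`), and `v ↦ X_v` is real-linear.
-/

open Matrix Quaternion

/-- The matrix commutator `[X,Y] = X·Y − Y·X`. -/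
noncomputable def mbracket {n : ℕ}
    (X Y : Matrix (Fin 1 ⊕ Fin n) (Fin 1 ⊕ Fin n) ℍ[ℝ]) :
    Matrix (Fin 1 ⊕ Fin n) (Fin 1 ⊕ Fin n) ℍ[ℝ] :=
  X * Y - Y * X

theorem Xh_add {n : ℕ} (v w : Fin n → ℍ[ℝ]) : Xh v + Xh w = Xh (fun j => v j + w j) := by
  ext1 i j
  rcases i with i | i <;> rcases j with j | j <;> simp [Xh, add_comm]

theorem Xh_smul {n : ℕ} (r : ℝ) (v : Fin n → ℍ[ℝ]) : r • Xh v = Xh (fun j => r • v j) := by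
  ext1 i j
  rcases i with i | i <;> rcases j with j | j <;> simp [Xh]

/-- The adjoint action of `α_u` on the tangent space is right multiplication by `-u`. -/
theorem mbracket_alphaH_Xh {n : ℕ} (u : ℍ[ℝ]) (hu : u.re = 0) (v : Fin n → ℍ[ℝ]) :
    mbracket (alphaH n u) (Xh v) = Xh (fun j => -(v j * u)) := by
  have hs : star u = -u := Quaternion.star_eq_neg.mpr hu
  unfold mbracket alphaH Xh
  rw [fromBlocks_multiply, fromBlocks_multiply]
  ext1 i j
  rcases i with i | i <;> rcases j with j | j <;> simp [Matrix.mul_apply, hs]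

/-- The anticommutator of two imaginary quaternions is the real number `-2⟨u, u'⟩`. -/
theorem imag_anticomm (u u' : ℍ[ℝ]) (hu : u.re = 0) (hu' : u'.re = 0) :
    u' * u + u * u' = ((-(2 * (u * star u').re) : ℝ) : ℍ[ℝ]) := by
  ext <;> simp [hu, hu'] <;> ring

/-- for purely imaginary `u, u'`,
`[α_u,[α_{u'},X_v]] + [α_{u'},[α_u,X_v]] = X_{v•(u'·u + u·u')}
  = −2⟨u,u'⟩·X_v`;
in particular if `u ⟂ u'` the adjoint actions of `α_u` and `α_{u'}` on
`{X_v : v ∈ ℍⁿ}` anticommute. -/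
theorem stmt_12 (n : ℕ) (hn : 1 ≤ n) (u u' : ℍ[ℝ])
    (hu : u.re = 0) (hu' : u'.re = 0) (v : Fin n → ℍ[ℝ]) :
    (mbracket (alphaH n u) (mbracket (alphaH n u') (Xh v))
        + mbracket (alphaH n u') (mbracket (alphaH n u) (Xh v))
      = Xh (fun j => v j * (u' * u + u * u'))) ∧
    Xh (fun j => v j * (u' * u + u * u'))
      = -((2 * (u * star u').re) • Xh v) := by
  constructor
  · rw [mbracket_alphaH_Xh u' hu', mbracket_alphaH_Xh u hu, mbracket_alphaH_Xh u hu,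
      mbracket_alphaH_Xh u' hu', Xh_add]
    congr 1
    funext j
    noncomm_ring
  · rw [← neg_smul, Xh_smul, imag_anticomm u u' hu hu']
    congr 1
    funext j
    exact Quaternion.mul_coe_eq_smul _ _
end
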